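/- arXiv:2107.01572 — 2 statements merged into one kernel-verified Lean document; each statement's English description precedes it below -/
import Mathlib

section
/- Let Ω ⊆ ℂ be a nonempty open set which is simply connected as a topological subspace. Let ψ : ℂ → ℝ be four times continuously differentiable on Ω (in the real sense, identifying ℂ with ℝ²) and biharmonic on Ω, i.e. Δ(Δψ)(z) = 0 for all z ∈ Ω. Then there exist functions f, g : ℂ → ℂ holomorphic on Ω such that ψ(z) = Im( conj(z)·f(z) + g(z) ) for every z ∈ Ω. -/
open Complex

/-- `∂ₓψ(z)`: real Fréchet derivative of `ψ` at `z` in direction `1`. -/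
noncomputable def pdx (ψ : ℂ → ℝ) (z : ℂ) : ℝ := fderiv ℝ ψ z 1

/-- `∂ᵧψ(z)`: real Fréchet derivative of `ψ` at `z` in direction `i`. -/
noncomputable def pdy (ψ : ℂ → ℝ) (z : ℂ) : ℝ := fderiv ℝ ψ z Complex.I

/-- Laplacian `Δψ = ∂ₓ∂ₓψ + ∂ᵧ∂ᵧψ`. -/
noncomputable def lap (ψ : ℂ → ℝ) (z : ℂ) : ℝ := pdx (pdx ψ) z + pdy (pdy ψ) z


open Complex Set Metric Topology

/-- Discrete copy of the complex numbers. -/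
def DC : Type := ℂ

noncomputable instance : AddCommGroup DC := inferInstanceAs (AddCommGroup ℂ)

instance : TopologicalSpace DC := ⊥

instance : DiscreteTopology DC := ⟨rfl⟩

lemma local_diff_const {h F G : ℂ → ℂ} {a b : ℂ} {r s : ℝ}
    (hF : ∀ z ∈ ball a r, HasDerivAt F (h z) z) (hG : ∀ z ∈ ball b s, HasDerivAt G (h z) z) :
    ∃ c, ∀ z ∈ ball a r ∩ ball b s, F z - G z = c := by
  have hd : ∀ z ∈ ball a r ∩ ball b s, HasDerivAt (fun z => F z - G z) 0 z := fun z hz => by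
    have h0 := (hF z hz.1).sub (hG z hz.2)
    rw [sub_self] at h0
    exact h0
  exact (isOpen_ball.inter isOpen_ball).exists_is_const_of_deriv_eq_zero
    ((convex_ball a r).inter (convex_ball b s)).isPreconnected
    (fun z hz => (hd z hz).differentiableAt.differentiableWithinAt)
    (fun z hz => (hd z hz).deriv)

/-- The bundle of germs of primitives. -/
noncomputable def primCore (Ω : Set ℂ) (h : ℂ → ℂ) (r : Ω → ℝ) (hr : ∀ i, 0 < r i)
    (F : Ω → ℂ → ℂ) (hF : ∀ i : Ω, ∀ z ∈ ball (i : ℂ) (r i), HasDerivAt (F i) (h z) z) :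
    FiberBundleCore Ω Ω DC where
  baseSet i := Subtype.val ⁻¹' ball (i : ℂ) (r i)
  isOpen_baseSet i := isOpen_ball.preimage continuous_subtype_val
  indexAt x := x
  mem_baseSet_at x := mem_ball_self (hr x)
  coordChange i j x v := v + (show DC from (F i x - F j x : ℂ))
  coordChange_self i x _ v := by
    have : (F i x - F i x : ℂ) = 0 := sub_self _
    rw [this]; exact add_zero v
  continuousOn_coordChange i j := by
    obtain ⟨c, hc⟩ := local_diff_const (hF i) (hF j)
    have : ContinuousOn (fun p : Ω × DC => p.2 + (show DC from c))
        (((Subtype.val ⁻¹' ball (i : ℂ) (r i)) ∩ (Subtype.val ⁻¹' ball (j : ℂ) (r j))) ×ˢ univ) :=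
      (continuous_of_discreteTopology (f := fun v : DC => v + (show DC from c))).comp_continuousOn
        continuous_snd.continuousOn
    refine this.congr fun p hp => ?_
    simp only [hc p.1 hp.1]
  coordChange_comp i j k x _ v := by
    have : ∀ v a b c : ℂ, (v + (a - b)) + (b - c) = v + (a - c) := by intros; ring
    exact this _ _ _ _

theorem exists_primitive (Ω : Set ℂ) (hΩ : IsOpen Ω) (hsc : SimplyConnectedSpace Ω)
    {h : ℂ → ℂ} (hh : DifferentiableOn ℂ h Ω) : ∃ G : ℂ → ℂ, ∀ z ∈ Ω, HasDerivAt G (h z) z := by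
  classical
  have hloc : ∀ i : Ω, ∃ r : ℝ, 0 < r ∧ ball (i : ℂ) r ⊆ Ω ∧
      ∃ F : ℂ → ℂ, ∀ z ∈ ball (i : ℂ) r, HasDerivAt F (h z) z := fun i => by
    obtain ⟨r, h0, h1⟩ := Metric.isOpen_iff.mp hΩ i i.2
    exact ⟨r, h0, h1, (hh.mono h1).isExactOn_ball⟩
  choose r hr hrΩ F hF using hloc
  let Z := primCore Ω h r hr F hF
  have cov : IsCoveringMap (Bundle.TotalSpace.proj : Bundle.TotalSpace DC Z.Fiber → Ω) :=
    FiberBundle.isCoveringMap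
  have := hΩ.locallyPathConnectedSpace
  obtain ⟨x₀⟩ : Nonempty Ω := inferInstance
  obtain ⟨s, ⟨-, hs⟩, -⟩ := cov.existsUnique_continuousMap_lifts (ContinuousMap.id Ω) x₀
    ⟨x₀, (0 : DC)⟩ rfl
  have hs1 : ∀ x, (s x).1 = x := fun x => congrFun hs x
  let v : Ω → ℂ := fun x => (s x).2
  let G : ℂ → ℂ := fun z => if hz : z ∈ Ω then F ⟨z, hz⟩ z + v ⟨z, hz⟩ else 0
  refine ⟨G, fun z hz => ?_⟩
  let i : Ω := ⟨z, hz⟩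
  have hc : ContinuousAt (fun x => ((Z.localTriv i) (s x)).2) i := by
    refine ContinuousAt.comp (g := Prod.snd) continuous_snd.continuousAt ?_
    refine ContinuousAt.comp (f := s) ?_ s.continuous.continuousAt
    apply (Z.localTriv i).continuousAt
    rw [Z.mem_localTriv_source]
    rw [hs1]
    exact mem_ball_self (hr i)
  have hev : ∀ᶠ x in 𝓝 i, ((Z.localTriv i) (s x)).2 = ((Z.localTriv i) (s i)).2 :=
    hc.eventually (show ∀ᶠ y in 𝓝 _, y = _ by rw [nhds_discrete]; simp)
  have hval : ∀ x : Ω, (((Z.localTriv i) (s x)).2 : DC) = (G x - F i x : ℂ) := fun x => by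
    have h1 : (((Z.localTriv i) (s x)).2 : DC)
      = (v x + (F (s x).1 (s x).1 - F i (s x).1) : ℂ) := rfl
    rw [h1, hs1]
    simp only [G, x.2, dif_pos, Subtype.coe_eta]
    exact (by ring : v x + (F x x - F i x) = F x x + v x - F i x)
  simp only [hval] at hev
  have hev2 : G =ᶠ[𝓝 z] fun w => F i w + (G z - F i z) := by
    have := (hΩ.isOpenEmbedding_subtypeVal.map_nhds_eq i)
    have h2 : ∀ᶠ w in 𝓝 z, (G w - F i w : ℂ) = G z - F i z := by
      rw [show z = (i : ℂ) from rfl, ← this]; exact hev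
    filter_upwards [h2] with w hw
    rw [← hw]; ring
  exact ((hF i z (mem_ball_self (hr i))).add_const _).congr_of_eventuallyEq hev2

open InnerProductSpace Laplacian

theorem harmonic_eq_re (Ω : Set ℂ) (hΩ : IsOpen Ω) (hsc : SimplyConnectedSpace Ω)
    {u : ℂ → ℝ} (hu : HarmonicOnNhd u Ω) :
    ∃ F : ℂ → ℂ, DifferentiableOn ℂ F Ω ∧ ∀ z ∈ Ω, u z = (F z).re := by
  have hg : DifferentiableOn ℂ (fun z ↦ (fderiv ℝ u z 1 : ℂ) - I * fderiv ℝ u z I) Ω :=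
    fun x hx ↦ (HarmonicAt.differentiableAt_complex_partial (hu x hx)).differentiableWithinAt
  obtain ⟨F, hF⟩ := exists_primitive Ω hΩ hsc hg
  have hFd : ∀ z ∈ Ω, HasFDerivAt (fun z => (F z).re) (fderiv ℝ u z) z := fun z hz => by
    have := reCLM.hasFDerivAt.comp z ((hF z hz).hasFDerivAt.restrictScalars ℝ)
    refine HasFDerivAt.congr_fderiv this (ContinuousLinearMap.ext fun a => ?_)
    have ha : a = a.re • (1 : ℂ) + a.im • (I : ℂ) := by simp
    conv_rhs => rw [ha, map_add, map_smul, map_smul]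
    simp
  have hpc : IsPreconnected Ω := by
    rw [← Subtype.range_coe (s := Ω)]
    exact isPreconnected_range continuous_subtype_val
  obtain ⟨a, ha⟩ := hΩ.exists_eq_add_of_fderiv_eq (𝕜 := ℝ) hpc (hu.contDiffOn.differentiableOn two_ne_zero)
    (fun z hz => (hFd z hz).differentiableAt.differentiableWithinAt)
    (fun z hz => (hFd z hz).fderiv.symm)
  refine ⟨fun z => F z + a, fun z hz => ((hF z hz).differentiableAt.add_const _).differentiableWithinAt, fun z hz => ?_⟩
  simpa using ha hz

lemma lap_eq {u : ℂ → ℝ} {z : ℂ} (hu : ContDiffAt ℝ 2 u z) : lap u z = Δ u z := by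
  have hd : DifferentiableAt ℝ (fderiv ℝ u) z :=
    (hu.fderiv_right (m := 1) (by norm_num)).differentiableAt (by norm_num)
  have e : ∀ v : ℂ, fderiv ℝ (fun w => fderiv ℝ u w v) z = (fderiv ℝ (fderiv ℝ u) z).flip v := by
    intro v
    rw [fderiv_clm_apply hd (by fun_prop)]
    simp
  simp only [laplacian_eq_iteratedFDeriv_complexPlane, iteratedFDeriv_two_apply]
  unfold lap pdx pdy
  rw [e, e]
  simp

lemma lap_contDiffAt {u : ℂ → ℝ} {z : ℂ} (hu : ContDiffAt ℝ 4 u z) : ContDiffAt ℝ 2 (lap u) z := by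
  have h1 : ∀ v : ℂ, ContDiffAt ℝ 3 (fun w => fderiv ℝ u w v) z := fun v =>
    (hu.fderiv_right (m := 3) (by norm_num)).clm_apply contDiffAt_const
  have h2 : ∀ v : ℂ, ContDiffAt ℝ 2 (fun y => fderiv ℝ (fun w => fderiv ℝ u w v) y v) z := fun v =>
    ((h1 v).fderiv_right (m := 2) (by norm_num)).clm_apply contDiffAt_const
  exact (h2 1).add (h2 I)

lemma fderiv_aux {A B : ℂ → ℂ} {a b z : ℂ} (hA : HasDerivAt A a z) (hB : HasDerivAt B b z) (v : ℂ) :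
    fderiv ℝ (fun w => (A w + (starRingEnd ℂ) w * B w).im) z v =
      (a * v + (starRingEnd ℂ) v * B z + (starRingEnd ℂ) z * (b * v)).im := by
  have h1 := hA.hasFDerivAt.restrictScalars ℝ
  have h2 := hB.hasFDerivAt.restrictScalars ℝ
  have h3 : HasFDerivAt (fun w : ℂ => (starRingEnd ℂ) w) (conjCLE : ℂ →L[ℝ] ℂ) z :=
    conjCLE.hasFDerivAt
  have h4 := imCLM.hasFDerivAt.comp z (h1.add (h3.mul h2))
  have h5 : HasFDerivAt (fun w => (A w + (starRingEnd ℂ) w * B w).im) _ z := h4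
  rw [h5.fderiv]
  simp
  ring

lemma lap_aux {Ω : Set ℂ} (hΩ : IsOpen Ω) {f : ℂ → ℂ} (hf : DifferentiableOn ℂ f Ω) {z : ℂ}
    (hz : z ∈ Ω) : lap (fun w => ((starRingEnd ℂ) w * f w).im) z = 4 * (deriv f z).im := by
  have d1 : ∀ w ∈ Ω, HasDerivAt f (deriv f w) w := fun w hw =>
    (hf.differentiableAt (hΩ.mem_nhds hw)).hasDerivAt
  have d2 : HasDerivAt (deriv f) (deriv (deriv f) z) z :=
    ((hf.deriv hΩ).differentiableAt (hΩ.mem_nhds hz)).hasDerivAt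
  have e : ∀ v : ℂ, ∀ w ∈ Ω, fderiv ℝ (fun w => ((starRingEnd ℂ) w * f w).im) w v =
      ((starRingEnd ℂ) v * f w + (starRingEnd ℂ) w * (deriv f w * v)).im := fun v w hw => by
    have := fderiv_aux (hasDerivAt_const w (0 : ℂ)) (d1 w hw) v
    simpa using this
  have e2 : ∀ v : ℂ, fderiv ℝ (fun y => fderiv ℝ (fun w => ((starRingEnd ℂ) w * f w).im) y v) z v
      = ((starRingEnd ℂ) v * deriv f z * v + (starRingEnd ℂ) v * (deriv f z * v)
        + (starRingEnd ℂ) z * (deriv (deriv f) z * v * v)).im := fun v => by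
    have he : (fun y => fderiv ℝ (fun w => ((starRingEnd ℂ) w * f w).im) y v) =ᶠ[𝓝 z]
      fun w => ((starRingEnd ℂ) v * f w + (starRingEnd ℂ) w * (deriv f w * v)).im := by
      filter_upwards [hΩ.mem_nhds hz] with w hw using e v w hw
    rw [he.fderiv_eq]
    exact fderiv_aux ((d1 z hz).const_mul _) (d2.mul_const v) v
  unfold lap pdx pdy
  rw [e2, e2]
  simp
  ring

/-- Goursat representation: every biharmonic function on a nonempty simply connected
open set `Ω ⊆ ℂ` can be written as `Im (conj z * f z + g z)` with `f, g` holomorphic. -/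
theorem goursat_representation (Ω : Set ℂ) (hΩ : IsOpen Ω) (hne : Ω.Nonempty)
    (hsc : SimplyConnectedSpace Ω)
    (ψ : ℂ → ℝ) (hψ : ContDiffOn ℝ 4 ψ Ω)
    (hbih : ∀ z ∈ Ω, lap (lap ψ) z = 0) :
    ∃ f g : ℂ → ℂ, DifferentiableOn ℂ f Ω ∧ DifferentiableOn ℂ g Ω ∧
      ∀ z ∈ Ω, ψ z = ((starRingEnd ℂ) z * f z + g z).im := by
  have hψ' : ∀ z ∈ Ω, ContDiffAt ℝ 4 ψ z := fun z hz => hψ.contDiffAt (hΩ.mem_nhds hz)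
  have hu : HarmonicOnNhd (lap ψ) Ω := fun z hz => by
    refine ⟨lap_contDiffAt (hψ' z hz), ?_⟩
    filter_upwards [hΩ.mem_nhds hz] with w hw
    rw [← lap_eq (lap_contDiffAt (hψ' w hw)), hbih w hw]; rfl
  obtain ⟨H, hH, hHu⟩ := harmonic_eq_re Ω hΩ hsc hu
  obtain ⟨f, hf⟩ := exists_primitive Ω hΩ hsc (hH.const_mul (I / 4))
  have hfd : DifferentiableOn ℂ f Ω := fun z hz =>
    (hf z hz).differentiableAt.differentiableWithinAt
  have hp : ∀ z ∈ Ω, ContDiffAt ℝ 2 (fun w => ((starRingEnd ℂ) w * f w).im) z := fun z hz => by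
    have h1 : ContDiffAt ℝ 2 f z :=
      ((hfd.analyticAt (hΩ.mem_nhds hz)).contDiffAt (n := 2)).restrict_scalars ℝ
    have h2 : ContDiffAt ℝ 2 (fun w : ℂ => (starRingEnd ℂ) w) z := conjCLE.contDiff.contDiffAt
    exact imCLM.contDiff.contDiffAt.comp z (h2.mul h1)
  have hv : HarmonicOnNhd (ψ - fun w => ((starRingEnd ℂ) w * f w).im) Ω := fun z hz => by
    refine ⟨((hψ' z hz).of_le (by norm_num)).sub (hp z hz), ?_⟩
    filter_upwards [hΩ.mem_nhds hz] with w hw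
    have hψ2 := (hψ' w hw).of_le (show (2 : WithTop ℕ∞) ≤ 4 by norm_num)
    rw [hψ2.laplacian_sub (hp w hw), ← lap_eq hψ2, ← lap_eq (hp w hw), lap_aux hΩ hfd hw,
      hHu w hw, (hf w hw).deriv]
    simp
  obtain ⟨G, hG, hGv⟩ := harmonic_eq_re Ω hΩ hsc hv
  refine ⟨f, fun z => I * G z, hfd, hG.const_mul I, fun z hz => ?_⟩
  have := hGv z hz
  simp only [Pi.sub_apply] at this
  rw [add_im, I_mul_im, ← this]
  ring
end

section
/- Let Ω ⊆ ℂ be a nonempty open connected set and let f, g : ℂ → ℂ be holomorphic on Ω. If Im( conj(z)·f(z) + g(z) ) = 0 for every z ∈ Ω, then there exist real numbers γ, α and a complex number C such that f(z) = γ·z + C and g(z) = conj(C)·z + α for every z ∈ Ω. -/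
open Complex

lemma gu_path (z v : ℂ) : HasDerivAt (fun t : ℝ => z + (t : ℂ) * v) v 0 := by
  have h : HasDerivAt (fun t : ℝ => (t : ℂ)) 1 0 := Complex.ofRealCLM.hasDerivAt
  simpa using (h.mul_const v).const_add z

lemma gu_deriv {P Q : ℂ → ℂ} {z p q : ℂ} (hP : HasDerivAt P p z) (hQ : HasDerivAt Q q z)
    (v : ℂ) : HasDerivAt (fun t : ℝ => (starRingEnd ℂ) (z + (t : ℂ) * v) * P (z + (t : ℂ) * v)
      + Q (z + (t : ℂ) * v)) ((starRingEnd ℂ) v * P z + (starRingEnd ℂ) z * (p * v) + q * v) 0 := by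
  have h := gu_path z v
  have hz : z + ((0 : ℝ) : ℂ) * v = z := by simp
  have h1 : HasDerivAt (fun t : ℝ => P (z + (t : ℂ) * v)) (p * v) 0 :=
    HasDerivAt.comp_of_eq (0 : ℝ) hP h hz.symm
  have h2 : HasDerivAt (fun t : ℝ => Q (z + (t : ℂ) * v)) (q * v) 0 :=
    HasDerivAt.comp_of_eq (0 : ℝ) hQ h hz.symm
  have h3 : HasDerivAt (fun t : ℝ => (starRingEnd ℂ) (z + (t : ℂ) * v)) ((starRingEnd ℂ) v) 0 :=
    h.star
  have h4 := (h3.mul h1).add h2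
  rw [hz] at h4
  exact h4.congr_deriv (by ring)

lemma gu_ev {Ω : Set ℂ} (hΩ : IsOpen Ω) {z : ℂ} (hz : z ∈ Ω) (v : ℂ) :
    ∀ᶠ t : ℝ in nhds 0, z + (t : ℂ) * v ∈ Ω := by
  apply (gu_path z v).continuousAt.eventually_mem
  simpa using hΩ.mem_nhds hz

/-- Uniqueness in the Goursat representation: if `Im (conj z * f z + g z)` vanishes
identically on a nonempty open connected set, then `f(z) = γ z + C` and
`g(z) = conj C * z + α` for some real `γ, α` and complex `C`. -/
theorem goursat_uniqueness (Ω : Set ℂ) (hΩ : IsOpen Ω) (hconn : IsConnected Ω)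
    (f g : ℂ → ℂ) (hf : DifferentiableOn ℂ f Ω) (hg : DifferentiableOn ℂ g Ω)
    (h0 : ∀ z ∈ Ω, ((starRingEnd ℂ) z * f z + g z).im = 0) :
    ∃ (γ α : ℝ) (C : ℂ), ∀ z ∈ Ω,
      f z = (γ : ℂ) * z + C ∧ g z = (starRingEnd ℂ) C * z + (α : ℂ) := by
  have hf' := hf.deriv hΩ
  have hg' := hg.deriv hΩ
  have D : ∀ {k : ℂ → ℂ}, DifferentiableOn ℂ k Ω → ∀ z ∈ Ω, HasDerivAt k (deriv k z) z :=
    fun hk z hz => (hk.differentiableAt (hΩ.mem_nhds hz)).hasDerivAt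
  have A : ∀ z ∈ Ω, (starRingEnd ℂ) z * deriv f z + deriv g z = (starRingEnd ℂ) (f z) := by
    intro z hz
    have key : ∀ v : ℂ, ((starRingEnd ℂ) v * f z + (starRingEnd ℂ) z * (deriv f z * v)
        + deriv g z * v).im = 0 := by
      intro v
      have h1 := (Complex.imCLM.hasFDerivAt.comp_hasDerivAt (0 : ℝ)
        (gu_deriv (D hf z hz) (D hg z hz) v))
      refine h1.unique ((hasDerivAt_const (0 : ℝ) (0 : ℝ)).congr_of_eventuallyEq ?_)
      filter_upwards [gu_ev hΩ hz v] with t ht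
      exact h0 _ ht
    have k1 := key 1
    have k2 := key I
    simp at k1 k2
    apply Complex.ext <;> simp <;> linarith
  have B : ∀ z ∈ Ω, (deriv f z).im = 0 := by
    intro z hz
    have key : ∀ v : ℂ, (starRingEnd ℂ) v * deriv f z + (starRingEnd ℂ) z * (deriv (deriv f) z * v)
        + deriv (deriv g) z * v = (starRingEnd ℂ) (deriv f z * v) := by
      intro v
      have h1 := gu_deriv (D hf' z hz) (D hg' z hz) v
      have h2 : HasDerivAt (fun t : ℝ => f (z + (t : ℂ) * v)) (deriv f z * v) 0 :=
        HasDerivAt.comp_of_eq (0 : ℝ) (D hf z hz) (gu_path z v) (by simp)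
      refine h1.unique (h2.star.congr_of_eventuallyEq ?_)
      filter_upwards [gu_ev hΩ hz v] with t ht
      exact A _ ht
    have k1 := congrArg Complex.im (key 1)
    have k2 := congrArg Complex.re (key I)
    simp at k1 k2
    linarith
  obtain ⟨c, hc⟩ := AnalyticOnNhd.eq_const_of_im_eq_const (hf'.analyticOnNhd hΩ) B hΩ hconn
  obtain ⟨z0, hz0⟩ := hconn.nonempty
  have hcr : ((c.re : ℝ) : ℂ) = c := by
    apply Complex.ext
    · simp
    · have := B z0 hz0
      rw [hc z0 hz0] at this
      simp [this]
  have K : ∀ (k : ℂ → ℂ) (a : ℂ), DifferentiableOn ℂ k Ω → (∀ z ∈ Ω, deriv k z = a) →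
      ∃ b, ∀ z ∈ Ω, k z = a * z + b := by
    intro k a hk hka
    have hd : ∀ z ∈ Ω, HasDerivAt (fun z => k z - a * z) 0 z := by
      intro z hz
      have := (D hk z hz).sub ((hasDerivAt_id z).const_mul a)
      exact this.congr_deriv (by rw [hka z hz]; ring)
    obtain ⟨b, hb⟩ := hΩ.exists_is_const_of_deriv_eq_zero hconn.isPreconnected
      (fun z hz => (hd z hz).differentiableAt.differentiableWithinAt)
      (fun z hz => (hd z hz).deriv)
    exact ⟨b, fun z hz => by rw [← hb z hz]; ring⟩
  obtain ⟨C, hC⟩ := K f c hf hc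
  obtain ⟨a, ha⟩ := K g ((starRingEnd ℂ) C) hg (by
    intro z hz
    have h1 := A z hz
    rw [hc z hz, hC z hz, ← hcr] at h1
    simp only [map_add, map_mul, Complex.conj_ofReal] at h1
    linear_combination h1)
  refine ⟨c.re, a.re, C, fun z hz => ⟨by rw [hcr]; exact hC z hz, ?_⟩⟩
  have ham : a.im = 0 := by
    have h1 := h0 z0 hz0
    rw [hC z0 hz0, ha z0 hz0, ← hcr] at h1
    simp at h1
    linarith
  rw [ha z hz]
  congr 1
  apply Complex.ext <;> simp [ham]
end
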